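/- Let V be a variety having a weak m-difference term for every m ≥ 2, and let A ∈ V. Then: (1) for any θ ∈ Con A and θ₁,…,θₙ ∈ Ξ(θ): (a) for any congruence γ of A, C(θ₁,…,θₙ;γ) holds if and only if [θ₁,…,θₙ] ≤ γ; (b) if η ≤ θ₁∧⋯∧θₙ, then [θ₁/η,…,θₙ/η] = ([θ₁,…,θₙ] ∨ η)/η in A/η; (c) for n > m ≥ 1, [θ₁,…,θ_m,[θ_{m+1},…,θₙ]] ≤ [θ₁,…,θₙ]; (2) for any n ≥ 2, the class of n-supernilpotent algebras in V is closed under homomorphic images, subalgebras, and products (i.e., forms a subvariety of V); (3) if A is n-supernilpotent, then A is nilpotent of class n−1, and consequently every covering pair γ ≺ σ inside a supernilpotent interval of Con A is abelian (C(σ,σ;γ) holds). -/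

import Mathlib

set_option autoImplicit false

namespace UA

/-- A signature: a type of operation symbols, each with a finite arity. -/
structure Signature : Type 1 where
  ops : Type
  arity : ops → ℕ

/-- An algebra for a signature: a carrier set together with an interpretation
of every operation symbol. -/
structure Algebra (σ : Signature) : Type 1 where
  carrier : Type
  interp : (o : σ.ops) → (Fin (σ.arity o) → carrier) → carrier

variable {σ : Signature}

/-- A congruence of an algebra: an equivalence relation compatible with all
basic operations. -/
structure Con (A : Algebra σ) : Type where
  r : A.carrier → A.carrier → Prop
  refl : ∀ a, r a a
  symm : ∀ {a b}, r a b → r b a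
  trans : ∀ {a b c}, r a b → r b c → r a c
  compat : ∀ (o : σ.ops) (x y : Fin (σ.arity o) → A.carrier),
      (∀ i, r (x i) (y i)) → r (A.interp o x) (A.interp o y)

namespace Con

variable {A : Algebra σ}

instance : LE (Con A) := ⟨fun c d => ∀ a b : A.carrier, c.r a b → d.r a b⟩
instance : LT (Con A) := ⟨fun c d => c ≤ d ∧ ¬ d ≤ c⟩

/-- The total congruence `1_A`. -/
def top : Con A where
  r := fun _ _ => True
  refl := fun _ => trivial
  symm := fun _ => trivial
  trans := fun _ _ => trivial
  compat := fun _ _ _ _ => trivial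

/-- The identity congruence `0_A`. -/
def bot : Con A where
  r := fun a b => a = b
  refl := fun _ => rfl
  symm := fun h => h.symm
  trans := fun h h' => h.trans h'
  compat := fun o _ _ h => congrArg (A.interp o) (funext h)

/-- Meet of an arbitrary family of congruences (intersection). -/
def sInf (S : Set (Con A)) : Con A where
  r a b := ∀ c ∈ S, c.r a b
  refl a c _ := c.refl a
  symm h c hc := c.symm (h c hc)
  trans h h' c hc := c.trans (h c hc) (h' c hc)
  compat o x y h c hc := c.compat o x y (fun i => h i c hc)

/-- Binary meet of congruences. -/
def inf (c d : Con A) : Con A where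
  r a b := c.r a b ∧ d.r a b
  refl a := ⟨c.refl a, d.refl a⟩
  symm h := ⟨c.symm h.1, d.symm h.2⟩
  trans h h' := ⟨c.trans h.1 h'.1, d.trans h.2 h'.2⟩
  compat o x y h := ⟨c.compat o x y fun i => (h i).1, d.compat o x y fun i => (h i).2⟩

/-- The congruence generated by a set of pairs. -/
def conGen (S : Set (A.carrier × A.carrier)) : Con A :=
  sInf {c : Con A | ∀ p ∈ S, c.r p.1 p.2}

/-- Binary join of congruences. -/
def sup (c d : Con A) : Con A := conGen {p | c.r p.1 p.2 ∨ d.r p.1 p.2}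

/-- Join of a family of congruences. -/
def iSup {I : Type} (f : I → Con A) : Con A := conGen {p | ∃ i, (f i).r p.1 p.2}

/-- Composition of congruences as binary relations. -/
def comp (c d : Con A) (a b : A.carrier) : Prop := ∃ x, c.r a x ∧ d.r x b

/-- `d` covers `c` in the congruence lattice. -/
def Covers (c d : Con A) : Prop := c < d ∧ ∀ e : Con A, c < e → e ≤ d → e = d

theorem le_sup_right {c d : Con A} : d ≤ sup c d :=
  fun a b h e he => he (a, b) (Or.inr h)

def toSetoid (c : Con A) : Setoid A.carrier := ⟨c.r, ⟨c.refl, c.symm, c.trans⟩⟩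

end Con

/-- The quotient algebra `A/γ`. -/
noncomputable def quotAlg (A : Algebra σ) (γ : Con A) : Algebra σ where
  carrier := Quotient γ.toSetoid
  interp o x := Quotient.mk γ.toSetoid (A.interp o (fun i => (x i).out))

/-- The quotient congruence `α/γ` for `γ ≤ α`. -/
noncomputable def Con.quot {A : Algebra σ} (α γ : Con A) (h : γ ≤ α) : Con (quotAlg A γ) where
  r x y := Quotient.liftOn₂ x y (fun a b => α.r a b)
    (fun a b a' b' ha hb => propext
      ⟨fun hr => α.trans (α.symm (h _ _ ha)) (α.trans hr (h _ _ hb)),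
       fun hr => α.trans (h _ _ ha) (α.trans hr (α.symm (h _ _ hb)))⟩)
  refl x := Quotient.inductionOn x fun a => α.refl a
  symm {x y} h' := Quotient.inductionOn₂ x y (fun _ _ hab => α.symm hab) h'
  trans {x y z} h1 h2 :=
    Quotient.inductionOn₃ x y z (fun _ _ _ hab hbc => α.trans hab hbc) h1 h2
  compat o x y hxy := by
    show α.r (A.interp o fun i => (x i).out) (A.interp o fun i => (y i).out)
    refine α.compat o _ _ fun i => ?_
    have h1 := hxy i
    rw [← Quotient.out_eq (x i), ← Quotient.out_eq (y i)] at h1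
    exact h1

/-- The polynomial operations of an algebra: the clone generated by the basic
operations, the projections and the constants. -/
inductive IsPolynomial (A : Algebra σ) : {n : ℕ} → ((Fin n → A.carrier) → A.carrier) → Prop
  | proj {n : ℕ} (i : Fin n) : IsPolynomial A (fun x => x i)
  | const {n : ℕ} (a : A.carrier) : IsPolynomial A (fun _ : Fin n → A.carrier => a)
  | app {n : ℕ} (o : σ.ops) (g : Fin (σ.arity o) → (Fin n → A.carrier) → A.carrier) :
      (∀ j, IsPolynomial A (g j)) → IsPolynomial A (fun x => A.interp o (fun j => g j x))

/-- Substituting, coordinatewise according to the grouping `g` and the choice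
vector `ε`, the entries of `b` (where `ε` is `true`) or of `a` (where `ε` is `false`). -/
def chooseVec {β : Type} {N n : ℕ} (g : Fin N → Fin n) (a b : Fin N → β)
    (ε : Fin n → Bool) : Fin N → β :=
  fun i => if ε (g i) then b i else a i

/-- The higher centralizer relation `C(α₁,…,αₙ,β;δ)` of Bulatov.  Polynomials with
grouped variables are modelled by a polynomial `p` of arity `N` together with a
grouping map `g : Fin N → Fin (n+1)`; the group `Fin.last n` is the `β`-group. -/
def Centralizes {A : Algebra σ} {n : ℕ} (α : Fin n → Con A) (β δ : Con A) : Prop :=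
  ∀ (N : ℕ) (p : (Fin N → A.carrier) → A.carrier), IsPolynomial A p →
    ∀ (g : Fin N → Fin (n + 1)) (a b : Fin N → A.carrier),
      (∀ i, (Fin.lastCases (motive := fun _ => Con A) β α (g i)).r (a i) (b i)) →
      (∀ ε : Fin n → Bool, ε ≠ (fun _ => true) →
        δ.r (p (chooseVec g a b (Fin.lastCases (motive := fun _ => Bool) false ε)))
            (p (chooseVec g a b (Fin.lastCases (motive := fun _ => Bool) true ε)))) →
      δ.r (p (chooseVec g a b (Fin.lastCases (motive := fun _ => Bool) false fun _ => true)))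
          (p (chooseVec g a b (Fin.lastCases (motive := fun _ => Bool) true fun _ => true)))

/-- The higher commutator `[α₁,…,αₙ,β]`: the smallest congruence `δ` such that
`C(α₁,…,αₙ,β;δ)` holds. -/
def commutator {A : Algebra σ} {n : ℕ} (α : Fin n → Con A) (β : Con A) : Con A :=
  Con.sInf {δ : Con A | Centralizes α β δ}

/-- The higher commutator of a nonempty list of congruences, with the convention
`[α] = α` for a single congruence. -/
def commList {A : Algebra σ} : {n : ℕ} → (Fin (n + 1) → Con A) → Con A
  | 0, γ => γ 0
  | (n+1), γ => commutator (fun j : Fin (n+1) => γ j.castSucc) (γ (Fin.last (n+1)))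

/-- The `m`-fold commutator `[θ,…,θ]_m` (for `m ≥ 1`). -/
def nfold {A : Algebra σ} (θ : Con A) (m : ℕ) : Con A :=
  commList (fun _ : Fin (m - 1 + 1) => θ)

/-- The binary commutator `[c,d]`. -/
def binComm {A : Algebra σ} (c d : Con A) : Con A := commutator (fun _ : Fin 1 => c) d

/-- The lower central series `(θ]ⁿ`. -/
def lcs {A : Algebra σ} (θ : Con A) : ℕ → Con A
  | 0 => θ
  | (k+1) => binComm θ (lcs θ k)

/-- The derived series `[θ]ⁿ`. -/
def derived {A : Algebra σ} (θ : Con A) : ℕ → Con A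
  | 0 => θ
  | (k+1) => binComm (derived θ k) (derived θ k)

/-- An algebra is nilpotent if some term of the lower central series of `1_A` is `0_A`. -/
def Nilpotent (A : Algebra σ) : Prop := ∃ m, lcs (Con.top : Con A) m = Con.bot

/-- An algebra is nilpotent of class `n` if `(1_A]ⁿ = 0_A`. -/
def NilpotentOfClass (A : Algebra σ) (n : ℕ) : Prop := lcs (Con.top : Con A) n = Con.bot

/-- A congruence is solvable if some term of its derived series is `0_A`. -/
def SolvableCon {A : Algebra σ} (θ : Con A) : Prop := ∃ m, derived θ m = Con.bot

/-- `A` is `n`-supernilpotent if `[1_A,…,1_A]_n = 0_A`. -/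
def Supernilpotent (A : Algebra σ) (n : ℕ) : Prop := nfold (Con.top : Con A) n = Con.bot

/-- A polynomial `f` absorbs the tuple `a` to the element `c`. -/
def Absorbs (A : Algebra σ) {k : ℕ} (f : (Fin k → A.carrier) → A.carrier)
    (a : Fin k → A.carrier) (c : A.carrier) : Prop :=
  ∀ b : Fin k → A.carrier, (∃ i, b i = a i) → f b = c

/-- Terms over a signature with variables in `X`. -/
inductive Term (σ : Signature) (X : Type) : Type
  | var : X → Term σ X
  | app : (o : σ.ops) → (Fin (σ.arity o) → Term σ X) → Term σ X

/-- Evaluation of a term in an algebra under an assignment of the variables. -/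
def Term.eval {X : Type} (A : Algebra σ) (v : X → A.carrier) : Term σ X → A.carrier
  | Term.var x => v x
  | Term.app o t => A.interp o fun i => Term.eval A v (t i)

/-- Substitution of terms into a term. -/
def Term.subst {X Y : Type} : Term σ X → (X → Term σ Y) → Term σ Y
  | Term.var x, s => s x
  | Term.app o t, s => Term.app o fun i => Term.subst (t i) s

/-- `A` possesses a Mal'cev term. -/
def HasMalcevTerm (A : Algebra σ) : Prop :=
  ∃ t : Term σ (Fin 3), ∀ a b : A.carrier,
    t.eval A ![a, b, b] = a ∧ t.eval A ![b, b, a] = a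

/-- A class of algebras is a variety when it is the class of all models of a set
of identities. -/
def IsVariety (V : Algebra σ → Prop) : Prop :=
  ∃ E : Set (Term σ ℕ × Term σ ℕ),
    ∀ A : Algebra σ, V A ↔ ∀ e ∈ E, ∀ v : ℕ → A.carrier, e.1.eval A v = e.2.eval A v

/-- Two terms are `V`-equivalent when they evaluate equally in every member of `V`. -/
def vSetoid (V : Algebra σ → Prop) (X : Type) : Setoid (Term σ X) where
  r t s := ∀ A : Algebra σ, V A → ∀ v : X → A.carrier, t.eval A v = s.eval A v
  iseqv := ⟨fun _ _ _ _ => rfl, fun h A hA v => (h A hA v).symm,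
    fun h h' A hA v => (h A hA v).trans (h' A hA v)⟩

/-- The `V`-free algebra on the set `X` of generators. -/
noncomputable def freeAlg (V : Algebra σ → Prop) (X : Type) : Algebra σ where
  carrier := Quotient (vSetoid V X)
  interp o x := Quotient.mk (vSetoid V X) (Term.app o fun i => (x i).out)

/-- The principal congruence `θ(a,b)` generated by the pair `(a,b)`. -/
def conPair (A : Algebra σ) (a b : A.carrier) : Con A := Con.conGen {(a, b)}

/-- A weak difference term for the class `V`. -/
def IsWeakDiffTerm (V : Algebra σ → Prop) (c : Term σ (Fin 3)) : Prop :=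
  ∀ A : Algebra σ, V A → ∀ a b : A.carrier,
    (binComm (conPair A a b) (conPair A a b)).r (c.eval A ![a, b, b]) a ∧
    (binComm (conPair A a b) (conPair A a b)).r a (c.eval A ![b, b, a])

/-- A weak `n`-difference term for the class `V`. -/
def IsWeakNDiffTerm (V : Algebra σ → Prop) (n : ℕ) (c : Term σ (Fin 3)) : Prop :=
  ∀ A : Algebra σ, V A → ∀ a b : A.carrier,
    (nfold (conPair A a b) n).r (c.eval A ![a, b, b]) a ∧
    (nfold (conPair A a b) n).r a (c.eval A ![b, b, a])

/-- Order-preserving maps on the congruence lattice. -/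
def MonotoneCon {A : Algebra σ} (F : Con A → Con A) : Prop :=
  ∀ c d : Con A, c ≤ d → F c ≤ F d

/-- `p` is a weak `f`-term of `A` with respect to the interpretation `F`. -/
def IsWeakFTerm (A : Algebra σ) (F : Con A → Con A) (p : Term σ (Fin 3)) : Prop :=
  ∀ (θ : Con A) (a b : A.carrier), θ.r a b →
    (F θ).r (p.eval A ![a, b, b]) a ∧ (F θ).r a (p.eval A ![b, b, a])

/-- `p` is a weak `f`-term for the class `V`. -/
def HasWeakFTermVariety (V : Algebra σ → Prop) (p : Term σ (Fin 3)) : Prop :=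
  ∀ A : Algebra σ, V A → ∃ F : Con A → Con A, MonotoneCon F ∧ IsWeakFTerm A F p

/-- The set `T^θ_{n,f}(θ₁,…,θₙ)` of pairs coming from polynomials which
`f(θ)`-absorb on the cube `{ā₁,b̄₁}×⋯×{āₙ,b̄ₙ}`. -/
def TSet (A : Algebra σ) (F : Con A → Con A) (θ : Con A) {n : ℕ} (θs : Fin n → Con A) :
    Set (A.carrier × A.carrier) :=
  {pr | ∃ (N : ℕ) (g : (Fin N → A.carrier) → A.carrier), IsPolynomial A g ∧
    ∃ (gr : Fin N → Fin n) (a b : Fin N → A.carrier),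
      (∀ i, (θs (gr i)).r (a i) (b i)) ∧
      (∀ ε : Fin n → Bool, (∃ j, ε j = false) →
        (F θ).r (g (fun i => if ε (gr i) then b i else a i)) (g a)) ∧
      pr = (g b, g a)}

/-- Homomorphisms of algebras. -/
def IsHom (A B : Algebra σ) (h : A.carrier → B.carrier) : Prop :=
  ∀ (o : σ.ops) (x : Fin (σ.arity o) → A.carrier),
    h (A.interp o x) = B.interp o (fun i => h (x i))

/-- The product of a family of algebras. -/
def prodAlg {I : Type} (As : I → Algebra σ) : Algebra σ where
  carrier := ∀ i, (As i).carrier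
  interp o x i := (As i).interp o (fun j => x j i)

/-- The subuniverse generated by a subset. -/
inductive Gen (A : Algebra σ) (S : Set A.carrier) : A.carrier → Prop
  | base {a : A.carrier} : a ∈ S → Gen A S a
  | app (o : σ.ops) (x : Fin (σ.arity o) → A.carrier) :
      (∀ i, Gen A S (x i)) → Gen A S (A.interp o x)

/-- `A` possesses a Taylor term. -/
def HasTaylorTerm (A : Algebra σ) : Prop :=
  ∃ (n : ℕ) (t : Term σ (Fin n)), 1 ≤ n ∧
    (∀ a : A.carrier, t.eval A (fun _ => a) = a) ∧
    ∀ i : Fin n, ∃ u v : Fin n → Bool, u i = true ∧ v i = false ∧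
      ∀ x y : A.carrier,
        t.eval A (fun j => if u j then x else y) = t.eval A (fun j => if v j then x else y)

/-- The variety `V` possesses a Taylor term. -/
def VarietyHasTaylorTerm (V : Algebra σ → Prop) : Prop :=
  ∃ (n : ℕ) (t : Term σ (Fin n)), 1 ≤ n ∧
    (∀ A : Algebra σ, V A → ∀ a : A.carrier, t.eval A (fun _ => a) = a) ∧
    ∀ i : Fin n, ∃ u v : Fin n → Bool, u i = true ∧ v i = false ∧
      ∀ A : Algebra σ, V A → ∀ x y : A.carrier,
        t.eval A (fun j => if u j then x else y) = t.eval A (fun j => if v j then x else y)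

/-- `Ξ(θ)`: the smallest set of congruences containing `θ` and closed under
higher commutators (of arity at least 2) of its members. -/
inductive Xi {A : Algebra σ} (θ : Con A) : Con A → Prop
  | base : Xi θ θ
  | comm {k : ℕ} (γ : Fin (k + 2) → Con A) : (∀ j, Xi θ (γ j)) → Xi θ (commList γ)

/-- An expanded loop on the carrier `α` with extra operations indexed by `ι`. -/
structure ExpLoop (ι : Type) (ar : ι → ℕ) (α : Type) : Type where
  mul : α → α → α
  ldiv : α → α → α
  rdiv : α → α → α
  zero : α
  extra : (i : ι) → (Fin (ar i) → α) → α
  ldiv_mul : ∀ x y, ldiv x (mul x y) = y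
  mul_rdiv : ∀ x y, rdiv (mul x y) y = x
  mul_ldiv : ∀ x y, mul x (ldiv x y) = y
  rdiv_mul : ∀ x y, mul (rdiv x y) y = x
  zero_mul : ∀ x, mul zero x = x
  mul_zero : ∀ x, mul x zero = x

/-- Operation symbols of an expanded loop. -/
inductive LoopOp (ι : Type) : Type
  | mul | ldiv | rdiv | zero
  | extra : ι → LoopOp ι

/-- The signature of an expanded loop. -/
@[reducible] def loopSig (ι : Type) (ar : ι → ℕ) : Signature where
  ops := LoopOp ι
  arity o := match o with
    | .mul => 2
    | .ldiv => 2
    | .rdiv => 2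
    | .zero => 0
    | .extra i => ar i

/-- The algebra underlying an expanded loop. -/
def ExpLoop.toAlgebra {ι : Type} {ar : ι → ℕ} {α : Type} (L : ExpLoop ι ar α) :
    Algebra (loopSig ι ar) where
  carrier := α
  interp o := match o with
    | .mul => fun x => L.mul (x 0) (x 1)
    | .ldiv => fun x => L.ldiv (x 0) (x 1)
    | .rdiv => fun x => L.rdiv (x 0) (x 1)
    | .zero => fun _ => L.zero
    | .extra i => L.extra i

/-- An expanded loop is of `n`-type. -/
def ExpLoop.IsNType {ι : Type} {ar : ι → ℕ} {α : Type} (L : ExpLoop ι ar α) (n : ℕ) : Prop :=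
  (∀ p : Σ k : ℕ, (Fin k → α) → α,
      (∃ i : ι, p = ⟨ar i, L.extra i⟩) ↔
        (1 ≤ p.1 ∧ p.1 ≤ n - 1 ∧ IsPolynomial L.toAlgebra p.2 ∧
          Absorbs L.toAlgebra p.2 (fun _ => L.zero) L.zero)) ∧
  (∀ f : (Fin (n - 1) → α) → α,
      IsPolynomial L.toAlgebra f → Absorbs L.toAlgebra f (fun _ => L.zero) L.zero →
      ∀ (j : Fin (n - 1)) (x : Fin (n - 1) → α) (u v : α),
        f (Function.update x j (L.mul u v)) =
          L.mul (f (Function.update x j u)) (f (Function.update x j v))) ∧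
  (∀ k : ℕ, 2 ≤ k → k < n →
      commList (Fin.snoc (fun _ : Fin (n - k) => (Con.top : Con L.toAlgebra))
        (nfold Con.top k)) = Con.bot)

/-- `A` is polynomially equivalent to an `n`-type expanded loop on the same carrier. -/
def PolyEquivNTypeLoop (A : Algebra σ) (n : ℕ) : Prop :=
  ∃ (ι : Type) (ar : ι → ℕ) (L : ExpLoop ι ar A.carrier),
    L.IsNType n ∧
    ∀ (k : ℕ) (f : (Fin k → A.carrier) → A.carrier),
      IsPolynomial A f ↔ IsPolynomial L.toAlgebra f

/-- Left-associated product of a list with initial value `c`. -/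
def lprodFrom {β : Type} (mul : β → β → β) (c : β) (l : List β) : β := List.foldl mul c l

/-- Left-associated product of a list (with a default value for the empty list). -/
def lprodList {β : Type} (mul : β → β → β) (dflt : β) : List β → β
  | [] => dflt
  | a :: l => List.foldl mul a l

/-- Left-associated product of a nonempty tuple. -/
def lassoc {β : Type} (mul : β → β → β) : {m : ℕ} → (Fin (m + 1) → β) → β
  | 0, y => y 0
  | (m+1), y => mul (lassoc mul (Fin.init y)) (y (Fin.last (m+1)))

/-- `A` has a representation of degree `n`. -/
def HasRepOfDegree (A : Algebra σ) (n : ℕ) : Prop :=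
  ∃ (z : A.carrier) (r : (Fin 2 → A.carrier) → A.carrier),
    IsPolynomial A r ∧ (∀ x : A.carrier, r ![z, x] = x) ∧ (∀ x : A.carrier, r ![x, z] = x) ∧
    ∀ (k : ℕ) (f : (Fin k → A.carrier) → A.carrier), IsPolynomial A f →
      ∃ (c : A.carrier) (R : ℕ → (Fin k → A.carrier) → A.carrier),
        (∀ m : ℕ, 1 ≤ m → m ≤ min k n →
          ∃ (l : List (Finset (Fin k)))
            (t : (S : Finset (Fin k)) → (Fin S.card → A.carrier) → A.carrier),
            l.Nodup ∧
            (∀ S : Finset (Fin k), S ∈ l ↔ S.card = m) ∧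
            (∀ S ∈ l, IsPolynomial A (t S) ∧ Absorbs A (t S) (fun _ => z) z) ∧
            (∀ x : Fin k → A.carrier,
              R m x = lprodList (fun u v => r ![u, v]) z
                (l.map (fun S => t S (fun j => x ((S.orderIsoOfFin rfl j).val)))))) ∧
        ∀ x : Fin k → A.carrier,
          f x = lprodFrom (fun u v => r ![u, v]) c
            ((List.range' 1 (min k n)).map (fun m => R m x))

/-- Products of `0`-absorbing polynomials (of arities between `lo` and `hi`)
in a given set of variables. -/
inductive ProdOfAbs {ι : Type} {ar : ι → ℕ} {α : Type} (L : ExpLoop ι ar α)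
    (lo hi : ℕ) {I : Type} : ((I → α) → α) → Prop
  | base {p : ℕ} (h : (Fin p → α) → α) (sel : Fin p → I) :
      lo ≤ p → p ≤ hi → IsPolynomial L.toAlgebra h →
      Absorbs L.toAlgebra h (fun _ => L.zero) L.zero →
      ProdOfAbs L lo hi (fun v => h (fun j => v (sel j)))
  | mul {F G : (I → α) → α} :
      ProdOfAbs L lo hi F → ProdOfAbs L lo hi G →
      ProdOfAbs L lo hi (fun v => L.mul (F v) (G v))

/-- The terms `q_m` (for `m ≥ 2`, `qSeq q (m-2)` is `q_m`):
`q₂ := q`, `q_{m+1}(x,y,z) := q(x, q_m(x,y,y), q_m(x,y,z))`. -/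
def qSeq (q : Term σ (Fin 3)) : ℕ → Term σ (Fin 3)
  | 0 => q
  | (k+1) => q.subst ![Term.var 0, (qSeq q k).subst ![Term.var 0, Term.var 1, Term.var 1], qSeq q k]


/-! ### Helper lemmas -/

theorem Con.ext_r {A : Algebra σ} {c d : Con A} (h : ∀ a b, c.r a b ↔ d.r a b) : c = d := by
  have hr : c.r = d.r := by
    funext a b
    exact propext (h a b)
  cases c; cases d
  cases hr
  rfl

theorem Con.le_antisymm' {A : Algebra σ} {c d : Con A} (h : c ≤ d) (h' : d ≤ c) : c = d :=
  Con.ext_r fun a b => ⟨h a b, h' a b⟩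

theorem Con.le_trans' {A : Algebra σ} {c d e : Con A} (h : c ≤ d) (h' : d ≤ e) : c ≤ e :=
  fun a b hab => h' a b (h a b hab)

theorem Con.le_refl' {A : Algebra σ} (c : Con A) : c ≤ c := fun _ _ h => h

/-- Cubes of elements in directions `α i`. -/
inductive Cu {A : Algebra σ} {ι : Type} (α : ι → Con A) : ((ι → Bool) → A.carrier) → Prop
  | const (a : A.carrier) : Cu α (fun _ => a)
  | edge (i : ι) (x y : A.carrier) (h : (α i).r x y) : Cu α (fun ε => if ε i then y else x)
  | app (o : σ.ops) (x : Fin (σ.arity o) → (ι → Bool) → A.carrier) (h : ∀ j, Cu α (x j)) :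
      Cu α (fun ε => A.interp o (fun j => x j ε))

theorem IsPolynomial.reindex {A : Algebra σ} {n m : ℕ} {p : (Fin n → A.carrier) → A.carrier}
    (hp : IsPolynomial A p) (e : Fin n → Fin m) : IsPolynomial A (fun x => p (fun i => x (e i))) := by
  induction hp with
  | proj i => exact IsPolynomial.proj (e i)
  | const a => exact IsPolynomial.const a
  | app o g _ ih => exact IsPolynomial.app o (fun j x => g j (fun i => x (e i))) ih

theorem Cu.of_poly {A : Algebra σ} {n N : ℕ} {α : Fin n → Con A}
    {p : (Fin N → A.carrier) → A.carrier} (hp : IsPolynomial A p)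
    (g : Fin N → Fin n) (a b : Fin N → A.carrier) (h : ∀ i, (α (g i)).r (a i) (b i)) :
    Cu α (fun ε => p (chooseVec g a b ε)) := by
  induction hp with
  | proj i => exact Cu.edge (g i) (a i) (b i) (h i)
  | const c => exact Cu.const c
  | app o q _ ih => exact Cu.app o (fun j ε => q j (chooseVec g a b ε)) ih

theorem Cu.to_poly {A : Algebra σ} {n : ℕ} {α : Fin n → Con A} {F : (Fin n → Bool) → A.carrier}
    (hF : Cu α F) : ∃ (N : ℕ) (p : (Fin N → A.carrier) → A.carrier) (_ : IsPolynomial A p)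
      (g : Fin N → Fin n) (a b : Fin N → A.carrier), (∀ i, (α (g i)).r (a i) (b i)) ∧
      ∀ ε, F ε = p (chooseVec g a b ε) := by
  induction hF with
  | const a =>
    exact ⟨0, fun _ => a, IsPolynomial.const a, Fin.elim0, Fin.elim0, Fin.elim0,
      fun i => i.elim0, fun _ => rfl⟩
  | edge i x y h =>
    exact ⟨1, fun v => v 0, IsPolynomial.proj 0, fun _ => i, fun _ => x, fun _ => y,
      fun _ => h, fun _ => rfl⟩
  | app o x _ ih =>
    choose N p hp g a b h hF using ih
    let e := Fintype.equivFin (Σ j, Fin (N j))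
    refine ⟨_, fun v => A.interp o (fun j => p j (fun i => v (e ⟨j, i⟩))), ?_,
      fun k => g (e.symm k).1 (e.symm k).2, fun k => a (e.symm k).1 (e.symm k).2,
      fun k => b (e.symm k).1 (e.symm k).2, fun k => h _ _, ?_⟩
    · exact IsPolynomial.app o _ (fun j => (hp j).reindex (fun i => e ⟨j, i⟩))
    · intro ε
      show A.interp o (fun j => x j ε) = A.interp o _
      congr 1
      funext j
      rw [hF]
      congr 1
      funext i
      have key : ∀ q : (Σ j, Fin (N j)), q = ⟨j, i⟩ →
          (if ε (g j i) = true then b j i else a j i) =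
          if ε (g q.1 q.2) = true then b q.1 q.2 else a q.1 q.2 := by
        rintro _ rfl
        rfl
      exact key _ (e.symm_apply_apply _)

/-- The centralizer relation in cube form with distinguished direction `i₀`. -/
def Cen {A : Algebra σ} {ι : Type} [DecidableEq ι] (α : ι → Con A) (i₀ : ι) (δ : Con A) : Prop :=
  ∀ F, Cu α F → (∀ ε : ι → Bool, ε i₀ = false → (∃ j, j ≠ i₀ ∧ ε j = false) →
      δ.r (F ε) (F (Function.update ε i₀ true))) →
    δ.r (F (Function.update (fun _ => true) i₀ false)) (F fun _ => true)

theorem lastCases_eta {n : ℕ} {β : Type} (ε : Fin (n + 1) → β) :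
    (fun i => Fin.lastCases (motive := fun _ => β) (ε (Fin.last n)) (fun j => ε j.castSucc) i) = ε := by
  funext i
  refine Fin.lastCases ?_ (fun j => ?_) i <;> simp

theorem lastCases_update {n : ℕ} (ε : Fin n → Bool) (c d : Bool) :
    Function.update (fun i => Fin.lastCases (motive := fun _ => Bool) c ε i) (Fin.last n) d =
      (fun i => Fin.lastCases (motive := fun _ => Bool) d ε i) := by
  funext i
  refine Fin.lastCases ?_ (fun j => ?_) i
  · simp
  · simp [Function.update, Fin.castSucc_ne_last]

theorem centralizes_iff {A : Algebra σ} {n : ℕ} (θs : Fin (n + 1) → Con A) (δ : Con A) :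
    Centralizes (fun j : Fin n => θs j.castSucc) (θs (Fin.last n)) δ ↔ Cen θs (Fin.last n) δ := by
  have h1 : (fun i => Fin.lastCases (motive := fun _ => Bool) true (fun _ : Fin n => true) i)
      = fun _ => true := lastCases_eta (fun _ => true)
  have h2 : (fun i => Fin.lastCases (motive := fun _ => Bool) false (fun _ : Fin n => true) i)
      = Function.update (fun _ => true) (Fin.last n) false := by
    rw [← lastCases_update (fun _ : Fin n => true) true false, h1]
  have h3 := lastCases_eta θs
  constructor
  · intro H F hF hyp
    obtain ⟨N, p, hp, g, a, b, h, hFp⟩ := hF.to_poly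
    have := H N p hp g a b (fun i => by
      have := congrFun h3 (g i)
      rw [this]; exact h i) (fun ε hε => by
      rw [← hFp, ← hFp]
      have hj : ∃ j, ε j = false := by
        by_contra hc
        push Not at hc
        exact hε (funext fun j => by simpa using hc j)
      obtain ⟨j, hj⟩ := hj
      have := hyp (fun i => Fin.lastCases (motive := fun _ => Bool) false ε i) (by simp)
        ⟨j.castSucc, Fin.castSucc_ne_last j, by simpa using hj⟩
      rw [lastCases_update] at this
      exact this)
    rw [← hFp, ← hFp] at this
    rw [← h2]
    have h1' := congrArg F h1
    rw [← h1']
    exact this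
  · intro H N p hp g a b h hyp
    have hC := Cu.of_poly (α := θs) hp g a b (fun i => by
      have h' := h i
      have := congrFun h3 (g i)
      rw [this] at h'
      exact h')
    have := H _ hC (fun ε h0 hj => by
      obtain ⟨j, hj0, hj⟩ := hj
      have := hyp (fun j => ε j.castSucc) (fun hc => by
        revert hj hj0
        refine Fin.lastCases ?_ (fun k => ?_) j
        · intro h; exact absurd rfl h
        · intro _ hk
          have := congrFun hc k
          rw [this] at hk
          exact absurd hk (by simp))
      have e1 := lastCases_eta ε
      rw [h0] at e1
      have e2 := lastCases_update (fun j => ε j.castSucc) false true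
      rw [e1] at e2
      rw [e2]
      rw [← e1] at ⊢
      simpa using this)
    rw [← h2, ← h1] at this
    exact this

theorem commList_le {A : Algebra σ} {n : ℕ} (θs : Fin (n + 1) → Con A) (δ : Con A)
    (h : Cen θs (Fin.last n) δ) : commList θs ≤ δ := by
  cases n with
  | zero =>
    intro x y hxy
    have := h _ (Cu.edge (0 : Fin 1) x y hxy) (fun ε _ ⟨j, hj, _⟩ => absurd (Fin.ext (by have := j.2; simp only [Fin.val_last]; omega)) hj)
    simpa using this
  | succ n =>
    intro x y hxy
    exact hxy δ ((centralizes_iff θs δ).2 h)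

theorem Cu.rel {A : Algebra σ} {ι : Type} {α : ι → Con A} {F : (ι → Bool) → A.carrier}
    (hF : Cu α F) {θ : Con A} (h : ∀ i, α i ≤ θ) (ε ε' : ι → Bool) : θ.r (F ε) (F ε') := by
  induction hF with
  | const a => exact θ.refl a
  | edge i x y hxy =>
    have h1 := h i _ _ hxy
    by_cases h2 : ε i <;> by_cases h3 : ε' i <;> simp only [h2, h3, if_true]
    · exact θ.refl _
    · exact θ.symm h1
    · exact h1
    · exact θ.refl _
  | app o x _ ih => exact θ.compat o _ _ ih

theorem Cu.relOne {A : Algebra σ} {ι : Type} {α : ι → Con A} {F : (ι → Bool) → A.carrier}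
    (hF : Cu α F) (i : ι) (ε ε' : ι → Bool) (hε : ∀ j, j ≠ i → ε j = ε' j) :
    (α i).r (F ε) (F ε') := by
  induction hF with
  | const a => exact (α i).refl a
  | edge j x y hxy =>
    by_cases hj : j = i
    · subst hj
      by_cases h2 : ε j <;> by_cases h3 : ε' j <;> simp only [h2, h3, if_true]
      · exact (α j).refl _
      · exact (α j).symm hxy
      · exact hxy
      · exact (α j).refl _
    · simp only [hε j hj]
      exact (α i).refl _
  | app o x _ ih => exact (α i).compat o _ _ ih

theorem cen_commList {A : Algebra σ} {n : ℕ} (θs : Fin (n + 1) → Con A) :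
    Cen θs (Fin.last n) (commList θs) := by
  cases n with
  | zero =>
    intro F hF _
    exact hF.rel (θ := θs 0) (fun i => by rw [show i = 0 from Fin.ext (by have := i.2; simp only [Fin.val_zero]; omega)]; exact Con.le_refl' _) _ _
  | succ n =>
    intro F hF hyp δ hδ
    refine (centralizes_iff θs δ).1 hδ F hF (fun ε h0 hj => hyp ε h0 hj δ hδ)

theorem commList_le_last {A : Algebra σ} {n : ℕ} (θs : Fin (n + 1) → Con A) :
    commList θs ≤ θs (Fin.last n) :=
  commList_le _ _ fun F hF _ => hF.relOne _ _ _ fun j hj => by simp [hj]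

theorem Cu.mono {A : Algebra σ} {ι : Type} {α β : ι → Con A} (h : ∀ i, α i ≤ β i)
    {F : (ι → Bool) → A.carrier} (hF : Cu α F) : Cu β F := by
  induction hF with
  | const a => exact Cu.const a
  | edge i x y hxy => exact Cu.edge i x y (h i _ _ hxy)
  | app o x _ ih => exact Cu.app o x ih

theorem commList_mono {A : Algebra σ} {n : ℕ} {α β : Fin (n + 1) → Con A} (h : ∀ i, α i ≤ β i) :
    commList α ≤ commList β :=
  commList_le _ _ fun F hF hyp => cen_commList β F (hF.mono h) hyp

/-- Reindexing cubes: plugging in coordinates or constants. -/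
theorem Cu.reindex {A : Algebra σ} {ι κ : Type} {α : ι → Con A} {β : κ → Con A}
    (e : (κ → Bool) → ι → Bool)
    (he : ∀ i, (∃ k, α i ≤ β k ∧ ∀ ε, e ε i = ε k) ∨ ∃ c, ∀ ε, e ε i = c)
    {F : (ι → Bool) → A.carrier} (hF : Cu α F) : Cu β (fun ε => F (e ε)) := by
  induction hF with
  | const a => exact Cu.const a
  | edge i x y hxy =>
    rcases he i with ⟨k, hk, h⟩ | ⟨c, h⟩
    · simp only [h]
      exact Cu.edge k x y (hk _ _ hxy)
    · simp only [h]
      exact Cu.const _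
  | app o x _ ih => exact Cu.app o _ ih

theorem Cu.update {A : Algebra σ} {ι : Type} [DecidableEq ι] {α : ι → Con A}
    {F : (ι → Bool) → A.carrier} (hF : Cu α F) (i : ι) (c : Bool) :
    Cu α (fun ε => F (Function.update ε i c)) := by
  refine hF.reindex (fun ε => Function.update ε i c) fun j => ?_
  by_cases hj : j = i
  · right
    exact ⟨c, fun ε => by simp [hj]⟩
  · left
    exact ⟨j, Con.le_refl' _, fun ε => by simp [hj]⟩

theorem commList_succ_le {A : Algebra σ} {n : ℕ} (θ : Con A) :
    commList (fun _ : Fin (n + 1 + 1) => θ) ≤ commList (fun _ : Fin (n + 1) => θ) := by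
  refine commList_le _ _ fun F hF hyp => ?_
  have h1 : Cu (fun _ : Fin (n + 1) => θ)
      (fun ε => F (Fin.cons (α := fun _ => Bool) true ε)) := by
    refine hF.reindex _ fun i => ?_
    refine Fin.cases ?_ (fun k => ?_) i
    · right
      exact ⟨true, fun ε => by simp⟩
    · left
      exact ⟨k, Con.le_refl' _, fun ε => by simp⟩
  have h2 : ∀ (ε : Fin (n + 1) → Bool) (c : Bool),
      (Fin.cons (α := fun _ => Bool) true (Function.update ε (Fin.last n) c) : Fin (n + 2) → Bool)
      = Function.update (Fin.cons (α := fun _ => Bool) true ε) (Fin.last (n + 1)) c := by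
    intro ε c
    rw [← Fin.succ_last, Fin.cons_update]
  have h3 : (Fin.cons (α := fun _ => Bool) true (fun _ => true) : Fin (n + 2) → Bool)
      = fun _ => true := by
    funext i
    refine Fin.cases ?_ (fun k => ?_) i <;> simp
  have := cen_commList _ _ h1 (fun ε h0 ⟨j, hj, hj'⟩ => by
    rw [h2]
    refine hyp _ ?_ ⟨j.succ, ?_, ?_⟩
    · rw [← Fin.succ_last]; simpa using h0
    · rw [← Fin.succ_last]; simpa using hj
    · simpa using hj')
  simp only at this
  rw [h2, h3] at this
  exact this

/-- Ternary operations preserving all invariant subsets of powers. -/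
def Pres (A : Algebra σ) (p : A.carrier → A.carrier → A.carrier → A.carrier) : Prop :=
  ∀ (ι : Type) (S : (ι → A.carrier) → Prop),
    (∀ (o : σ.ops) (x : Fin (σ.arity o) → ι → A.carrier), (∀ j, S (x j)) →
      S (fun i => A.interp o (fun j => x j i))) →
    ∀ f g h, S f → S g → S h → S (fun i => p (f i) (g i) (h i))

theorem Pres.term {A : Algebra σ} (t : Term σ (Fin 3)) :
    Pres A (fun x y z => t.eval A ![x, y, z]) := by
  intro ι S hS f g h hf hg hh
  induction t with
  | var i =>
    fin_cases i
    · exact hf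
    · exact hg
    · exact hh
  | app o s ih => exact hS o (fun j i => (s j).eval A ![f i, g i, h i]) ih

theorem Pres.con {A : Algebra σ} {p : A.carrier → A.carrier → A.carrier → A.carrier}
    (hp : Pres A p) (c : Con A) {x x' y y' z z' : A.carrier} (hx : c.r x x') (hy : c.r y y')
    (hz : c.r z z') : c.r (p x y z) (p x' y' z') :=
  hp Bool (fun f => c.r (f false) (f true)) (fun o x h => c.compat o _ _ h)
    (fun b => if b then x' else x) (fun b => if b then y' else y) (fun b => if b then z' else z)
    hx hy hz

theorem Pres.cu {A : Algebra σ} {p : A.carrier → A.carrier → A.carrier → A.carrier}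
    (hp : Pres A p) {ι : Type} {α : ι → Con A} {F G H : (ι → Bool) → A.carrier}
    (hF : Cu α F) (hG : Cu α G) (hH : Cu α H) : Cu α (fun ε => p (F ε) (G ε) (H ε)) :=
  hp _ (Cu α) (fun o x h => Cu.app o x h) F G H hF hG hH

/-- `p` is a Mal'cev operation modulo `δ` on the blocks of `θ`. -/
def Mal {A : Algebra σ} (p : A.carrier → A.carrier → A.carrier → A.carrier) (θ δ : Con A) : Prop :=
  ∀ a b, θ.r a b → δ.r (p a b b) a ∧ δ.r (p b b a) a

theorem reduce {A : Algebra σ} {ι : Type} [DecidableEq ι]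
    {p : A.carrier → A.carrier → A.carrier → A.carrier}
    (hp : Pres A p) {θ δ γ : Con A} (hm : Mal p θ δ) (hδγ : δ ≤ γ) {α : ι → Con A}
    (hα : ∀ i, α i ≤ θ) (i₀ : ι) (F : (ι → Bool) → A.carrier) (hF : Cu α F)
    (hyp : ∀ ε : ι → Bool, ε i₀ = false → (∃ j, j ≠ i₀ ∧ ε j = false) →
      γ.r (F ε) (F (Function.update ε i₀ true))) (s : Finset ι) (hs : i₀ ∉ s) :
    ∃ U, Cu α U ∧ (∀ ε, γ.r (U ε) (F ε)) ∧ ∀ ε : ι → Bool, ε i₀ = false →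
      (∃ j ∈ s, ε j = false) → δ.r (U ε) (U (Function.update ε i₀ true)) := by
  induction s using Finset.induction_on with
  | empty => exact ⟨F, hF, fun ε => γ.refl _, fun ε _ ⟨j, hj, _⟩ => absurd hj (by simp)⟩
  | insert i s his ih =>
    have hi : i ≠ i₀ := fun h => hs (by simp [h])
    obtain ⟨U, hU, hUF, hUd⟩ := ih (fun h => hs (by simp [h]))
    refine ⟨fun ε => p (U ε) (U (Function.update ε i false))
      (U (Function.update (Function.update ε i false) i₀ false)), ?_, ?_, ?_⟩
    · exact hp.cu hU (hU.update i false) ((hU.update i₀ false).update i false)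
    · intro ε
      have hg : γ.r (U (Function.update (Function.update ε i false) i₀ false))
          (U (Function.update ε i false)) := by
        by_cases h0 : ε i₀ = false
        · have : Function.update (Function.update ε i false) i₀ false = Function.update ε i false := by
            rw [Function.update_eq_self_iff]
            simp [hi.symm, h0]
          rw [this]
          exact γ.refl _
        · have := hyp (Function.update (Function.update ε i false) i₀ false) (by simp)
            ⟨i, hi, by simp [hi]⟩
          have e : Function.update (Function.update (Function.update ε i false) i₀ false) i₀ true
              = Function.update ε i false := by
            rw [Function.update_idem, Function.update_eq_self_iff]
            simp only [Bool.not_eq_false] at h0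
            simp [hi.symm, h0]
          rw [e] at this
          exact γ.trans (hUF _) (γ.trans this (γ.symm (hUF _)))
      refine γ.trans (hp.con γ (γ.refl _) (γ.refl _) hg) (γ.trans ?_ (hUF ε))
      exact hδγ _ _ (hm _ _ (hU.rel hα _ _)).1
    · intro ε h0 ⟨j, hj, hjf⟩
      have hcomm : Function.update (Function.update ε i₀ true) i false =
          Function.update (Function.update ε i false) i₀ true := Function.update_comm hi.symm _ _ _
      simp only [hcomm, Function.update_idem]
      by_cases hji : j = i
      · subst hji
        have e1 : Function.update ε j false = ε := by
          rw [Function.update_eq_self_iff]; exact hjf.symm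
        have e2 : Function.update ε i₀ false = ε := by
          rw [Function.update_eq_self_iff]; exact h0.symm
        rw [e1, e2]
        exact δ.trans (hm _ _ (θ.refl _)).1 (δ.symm (hm _ _ (hU.rel hα _ _)).2)
      · have hjs : j ∈ s := by
          rcases Finset.mem_insert.1 hj with h | h
          · exact absurd h hji
          · exact h
        refine hp.con δ (hUd ε h0 ⟨j, hjs, hjf⟩) (hUd _ ?_ ⟨j, hjs, ?_⟩) (δ.refl _)
        · simp [hi.symm, h0]
        · simp [hji, hjf]

theorem reduce_all {A : Algebra σ} {ι : Type} [DecidableEq ι] [Fintype ι]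
    {p : A.carrier → A.carrier → A.carrier → A.carrier}
    (hp : Pres A p) {θ δ γ : Con A} (hm : Mal p θ δ) (hδγ : δ ≤ γ) {α : ι → Con A}
    (hα : ∀ i, α i ≤ θ) (i₀ : ι) (F : (ι → Bool) → A.carrier) (hF : Cu α F)
    (hyp : ∀ ε : ι → Bool, ε i₀ = false → (∃ j, j ≠ i₀ ∧ ε j = false) →
      γ.r (F ε) (F (Function.update ε i₀ true))) :
    ∃ U, Cu α U ∧ (∀ ε, γ.r (U ε) (F ε)) ∧ ∀ ε : ι → Bool, ε i₀ = false →
      (∃ j, j ≠ i₀ ∧ ε j = false) → δ.r (U ε) (U (Function.update ε i₀ true)) := by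
  obtain ⟨U, h1, h2, h3⟩ := reduce hp hm hδγ hα i₀ F hF hyp (Finset.univ.erase i₀) (by simp)
  exact ⟨U, h1, h2, fun ε h0 ⟨j, hj, hj'⟩ => h3 ε h0 ⟨j, by simp [hj], hj'⟩⟩

theorem cen_up {A : Algebra σ} {ι : Type} [DecidableEq ι] [Fintype ι]
    {p : A.carrier → A.carrier → A.carrier → A.carrier}
    (hp : Pres A p) {θ δ γ : Con A} (hm : Mal p θ δ) (hδγ : δ ≤ γ) {α : ι → Con A}
    (hα : ∀ i, α i ≤ θ) (i₀ : ι) (hC : Cen α i₀ δ) : Cen α i₀ γ := by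
  intro F hF hyp
  obtain ⟨U, h1, h2, h3⟩ := reduce_all hp hm hδγ hα i₀ F hF hyp
  exact γ.trans (γ.symm (h2 _)) (γ.trans (hδγ _ _ (hC U h1 h3)) (h2 _))

/-- In the presence of a local Mal'cev operation the pairs obtained from
absorbing cubes form a congruence. -/
def absCon {A : Algebra σ} {ι : Type}
    {p : A.carrier → A.carrier → A.carrier → A.carrier}
    (hp : Pres A p) {θ δ : Con A} (hm : Mal p θ δ) (hδθ : δ ≤ θ) (α : ι → Con A)
    (hα : ∀ i, α i ≤ θ) (hne : ∃ ε : ι → Bool, ε ≠ fun _ => true) : Con A :=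
  have hθ : ∀ x y, (∃ u, Cu α u ∧ (∀ ε, ε ≠ (fun _ => true) → δ.r (u ε) x) ∧
      δ.r (u fun _ => true) y) → θ.r x y := by
    rintro x y ⟨u, hu, h1, h2⟩
    obtain ⟨ε, hε⟩ := hne
    exact θ.trans (θ.symm (hδθ _ _ (h1 ε hε))) (θ.trans (hu.rel hα _ _) (hδθ _ _ h2))
  { r := fun x y => ∃ u, Cu α u ∧ (∀ ε, ε ≠ (fun _ => true) → δ.r (u ε) x) ∧
      δ.r (u fun _ => true) y
    refl := fun a => ⟨fun _ => a, Cu.const a, fun _ _ => δ.refl a, δ.refl a⟩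
    symm := fun {x y} h => by
      have hxy := hθ x y h
      obtain ⟨u, hu, h1, h2⟩ := h
      refine ⟨_, hp.cu (Cu.const x) hu (Cu.const y), fun ε hε => ?_, ?_⟩
      · exact δ.trans (hp.con δ (δ.refl _) (h1 ε hε) (δ.refl _)) (hm _ _ (θ.symm hxy)).2
      · exact δ.trans (hp.con δ (δ.refl _) h2 (δ.refl _)) (hm _ _ hxy).1
    trans := fun {x y z} h h' => by
      have hxy := hθ x y h
      have hyz := hθ y z h'
      obtain ⟨u, hu, h1, h2⟩ := h
      obtain ⟨v, hv, h3, h4⟩ := h'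
      refine ⟨_, hp.cu hu (Cu.const y) hv, fun ε hε => ?_, ?_⟩
      · exact δ.trans (hp.con δ (h1 ε hε) (δ.refl _) (h3 ε hε)) (hm _ _ hxy).1
      · exact δ.trans (hp.con δ h2 (δ.refl _) h4) (hm _ _ (θ.symm hyz)).2
    compat := fun o x y h => by
      choose u hu h1 h2 using h
      exact ⟨_, Cu.app o u hu, fun ε hε => δ.compat o _ _ fun i => h1 i ε hε,
        δ.compat o _ _ h2⟩ }

theorem cen_absCon {A : Algebra σ} {ι : Type} [DecidableEq ι] [Fintype ι]
    {p : A.carrier → A.carrier → A.carrier → A.carrier}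
    (hp : Pres A p) {θ δ : Con A} (hm : Mal p θ δ) (hδθ : δ ≤ θ) (α : ι → Con A)
    (hα : ∀ i, α i ≤ θ) (hne : ∃ ε : ι → Bool, ε ≠ fun _ => true) (i₀ : ι) :
    Cen α i₀ (absCon hp hm hδθ α hα hne) := by
  intro F hF hyp
  have hle : δ ≤ absCon hp hm hδθ α hα hne := fun x y hxy =>
    ⟨fun _ => x, Cu.const x, fun _ _ => δ.refl x, hxy⟩
  obtain ⟨U, hU, h2, h3⟩ := reduce_all hp hm hle hα i₀ F hF hyp
  refine (absCon hp hm hδθ α hα hne).trans ((absCon hp hm hδθ α hα hne).symm (h2 _))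
    ((absCon hp hm hδθ α hα hne).trans ?_ (h2 _))
  refine ⟨_, hp.cu hU (hU.update i₀ false)
    (Cu.const (U (Function.update (fun _ => true) i₀ false))), fun ε hε => ?_, ?_⟩
  · have key : δ.r (U ε) (U (Function.update ε i₀ false)) := by
      by_cases h0 : ε i₀ = false
      · have e2 : Function.update ε i₀ false = ε := by
          rw [Function.update_eq_self_iff]; exact h0.symm
        rw [e2]
        exact δ.refl _
      · simp only [Bool.not_eq_false] at h0
        have hj : ∃ j, ε j = false := by
          by_contra hc
          push Not at hc
          exact hε (funext fun j => by simpa using hc j)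
        obtain ⟨j, hj⟩ := hj
        have hji : j ≠ i₀ := fun h => by rw [h, h0] at hj; exact absurd hj (by simp)
        have := h3 (Function.update ε i₀ false) (by simp) ⟨j, hji, by simp [hji, hj]⟩
        rw [Function.update_idem] at this
        have e2 : Function.update ε i₀ true = ε := by
          rw [Function.update_eq_self_iff]; exact h0.symm
        rw [e2] at this
        exact δ.symm this
    exact δ.trans (hp.con δ key (δ.refl _) (δ.refl _)) (hm _ _ (hU.rel hα _ _)).2
  · exact (hm _ _ (hU.rel hα _ _)).1

theorem nested {A : Algebra σ} (θ : Con A) (m₀ r₀ : ℕ) (θs : Fin ((m₀ + 1) + (r₀ + 1)) → Con A)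
    {p : A.carrier → A.carrier → A.carrier → A.carrier} (hp : Pres A p)
    (hθs : ∀ i, θs i ≤ θ) (hm : Mal p θ (commList (n := m₀ + 1 + r₀) θs)) :
    commList (Fin.snoc (fun j : Fin (m₀ + 1) => θs (Fin.castAdd (r₀ + 1) j))
      (commList (fun j : Fin (r₀ + 1) => θs (Fin.natAdd (m₀ + 1) j)))) ≤
        commList (n := m₀ + 1 + r₀) θs := by
  set δ := commList (n := m₀ + 1 + r₀) θs with hδ
  have hδθ : δ ≤ θ := Con.le_trans' (commList_le_last (n := m₀ + 1 + r₀) θs) (hθs _)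
  have hne : ∃ ε : Fin (r₀ + 1) → Bool, ε ≠ fun _ => true :=
    ⟨fun _ => false, fun h => by simpa using congrFun h 0⟩
  have hκ := commList_le _ _ (cen_absCon hp hm hδθ
    (fun j : Fin (r₀ + 1) => θs (Fin.natAdd (m₀ + 1) j)) (fun i => hθs _) hne (Fin.last r₀))
  set κ := commList (fun j : Fin (r₀ + 1) => θs (Fin.natAdd (m₀ + 1) j)) with hκdef
  refine commList_le _ _ fun F hF hyp => ?_
  let e : (Fin ((m₀ + 1) + (r₀ + 1)) → Bool) → Fin (m₀ + 1 + 1) → Bool := fun ε =>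
    Fin.snoc (α := fun _ => Bool) (fun j => ε (Fin.castAdd (r₀ + 1) j))
      (decide (∀ j : Fin (r₀ + 1), ε (Fin.natAdd (m₀ + 1) j) = true))
  have hG : ∃ G, Cu θs G ∧ ∀ ε, δ.r (G ε) (F (e ε)) := by
    clear hyp
    induction hF with
    | const a => exact ⟨fun _ => a, Cu.const a, fun _ => δ.refl a⟩
    | edge i x y hxy =>
      revert hxy
      refine Fin.lastCases ?_ (fun j => ?_) i
      · intro hxy
        rw [Fin.snoc_last] at hxy
        obtain ⟨u, hu, h1, h2⟩ := hκ _ _ hxy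
        refine ⟨fun ε => u (fun j => ε (Fin.natAdd (m₀ + 1) j)), ?_, ?_⟩
        · exact hu.reindex (fun ε j => ε (Fin.natAdd (m₀ + 1) j)) fun i => Or.inl ⟨Fin.natAdd (m₀ + 1) i, Con.le_refl' _, fun ε => rfl⟩
        · intro ε
          simp only [e, Fin.snoc_last, decide_eq_true_eq]
          split_ifs with h
          · have : (fun j => ε (Fin.natAdd (m₀ + 1) j)) = fun _ => true := funext h
            rw [this]
            exact h2
          · exact h1 _ fun hc => h fun j => congrFun hc j
      · intro hxy
        rw [Fin.snoc_castSucc] at hxy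
        refine ⟨_, Cu.edge (Fin.castAdd (r₀ + 1) j) x y hxy, fun ε => ?_⟩
        simp only [e, Fin.snoc_castSucc]
        exact δ.refl _
    | app o x _ ih =>
      choose G hG h using ih
      exact ⟨_, Cu.app o G hG, fun ε => δ.compat o _ _ fun j => h j ε⟩
  obtain ⟨G, hG, hGF⟩ := hG
  have hlast : (Fin.last (m₀ + 1 + r₀) : Fin (m₀ + 1 + r₀ + 1)) =
    Fin.natAdd (m₀ + 1) (Fin.last r₀) := rfl
  have hcast : ∀ j : Fin (m₀ + 1), Fin.castAdd (r₀ + 1) j ≠ Fin.natAdd (m₀ + 1) (Fin.last r₀) := by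
    intro j h
    have := congrArg Fin.val h
    simp at this
    omega
  have he1 : e (fun _ => true) = fun _ => true := by
    funext i
    refine Fin.lastCases ?_ (fun j => ?_) i <;> simp [e]
  have hef : ∀ ε : Fin ((m₀ + 1) + (r₀ + 1)) → Bool, ε (Fin.natAdd (m₀ + 1) (Fin.last r₀)) = false →
      e ε = Function.update (e ε) (Fin.last (m₀ + 1)) false := by
    intro ε h
    symm
    rw [Function.update_eq_self_iff]
    simp only [e, Fin.snoc_last]
    symm
    rw [decide_eq_false_iff_not]
    intro hc
    rw [hc] at h
    exact absurd h (by simp)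
  have hupd : ∀ (ε : Fin ((m₀ + 1) + (r₀ + 1)) → Bool) c,
      ∃ d, e (Function.update ε (Fin.natAdd (m₀ + 1) (Fin.last r₀)) c) =
        Function.update (e ε) (Fin.last (m₀ + 1)) d := by
    intro ε c
    refine ⟨e (Function.update ε (Fin.natAdd (m₀ + 1) (Fin.last r₀)) c) (Fin.last (m₀ + 1)), ?_⟩
    funext i
    refine Fin.lastCases ?_ (fun j => ?_) i
    · simp
    · rw [Function.update_of_ne (Fin.castSucc_ne_last j)]
      simp only [e, Fin.snoc_castSucc]
      rw [Function.update_of_ne (hcast j)]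
  have main := cen_commList (n := m₀ + 1 + r₀) θs G hG (fun ε h0 hj => by
    rw [hlast] at h0 hj ⊢
    refine δ.trans (hGF _) (δ.trans ?_ (δ.symm (hGF _)))
    obtain ⟨d, hd⟩ := hupd ε true
    by_cases hall : ∃ j : Fin (m₀ + 1), ε (Fin.castAdd (r₀ + 1) j) = false
    · obtain ⟨j, hj⟩ := hall
      rw [hd]
      cases d with
      | false => rw [← hef ε h0]; exact δ.refl _
      | true =>
        refine hyp (e ε) ?_ ⟨j.castSucc, Fin.castSucc_ne_last j, ?_⟩
        · rw [hef ε h0]; simp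
        · simpa [e] using hj
    · have : e (Function.update ε (Fin.natAdd (m₀ + 1) (Fin.last r₀)) true) = e ε := by
        rw [hd]
        have hd' : d = false := by
          have := congrFun hd (Fin.last (m₀ + 1))
          rw [Function.update_self] at this
          rw [← this]
          simp only [e, Fin.snoc_last]
          rw [decide_eq_false_iff_not]
          intro hc
          obtain ⟨j, hj1, hj2⟩ := hj
          revert hj1 hj2
          refine Fin.addCases (m := m₀ + 1) (n := r₀ + 1) (fun i => ?_) (fun i => ?_) j
          · intro _ h
            exact hall ⟨i, h⟩
          · intro h1 h2
            have := hc i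
            rw [Function.update_of_ne h1, h2] at this
            exact absurd this (by simp)
        rw [hd', ← hef ε h0]
      rw [this]
      exact δ.refl _)
  rw [hlast] at main
  have e0 : e (Function.update (fun _ => true) (Fin.natAdd (m₀ + 1) (Fin.last r₀)) false) =
      Function.update (fun _ => true) (Fin.last (m₀ + 1)) false := by
    rw [hef _ (by simp)]
    obtain ⟨d, hd⟩ := hupd (fun _ => true) false
    rw [hd, Function.update_idem, he1]
  have h1 := hGF (Function.update (fun _ => true) (Fin.natAdd (m₀ + 1) (Fin.last r₀)) false)
  have h2 := hGF (fun _ => true)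
  rw [e0] at h1
  rw [he1] at h2
  exact δ.trans (δ.symm h1) (δ.trans main h2)

/-! ### Local Mal'cev operations from weak difference terms -/

theorem nfold_mono {A : Algebra σ} {c d : Con A} (h : c ≤ d) (n : ℕ) : nfold c n ≤ nfold d n :=
  commList_mono fun _ => h

theorem nfold_le {A : Algebra σ} (c : Con A) (n : ℕ) : nfold c n ≤ c :=
  commList_le_last (fun _ : Fin (n - 1 + 1) => c)

theorem nfold_anti {A : Algebra σ} (c : Con A) {m n : ℕ} (h : m ≤ n) : nfold c n ≤ nfold c m := by
  induction n, h using Nat.le_induction with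
  | base => exact Con.le_refl' _
  | succ n _ ih =>
    cases n with
    | zero => exact ih
    | succ n => exact Con.le_trans' (commList_succ_le c) ih

/-- Iterated `N`-fold commutator. -/
def iterD {A : Algebra σ} (N : ℕ) (θ : Con A) : ℕ → Con A
  | 0 => θ
  | (k+1) => nfold (iterD N θ k) N

theorem iterD_add {A : Algebra σ} (N : ℕ) (θ : Con A) (k l : ℕ) :
    iterD N (iterD N θ k) l = iterD N θ (k + l) := by
  induction l with
  | zero => rfl
  | succ l ih =>
    show nfold (iterD N (iterD N θ k) l) N = nfold (iterD N θ (k + l)) N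
    rw [ih]

theorem iterD_le {A : Algebra σ} (N : ℕ) (θ : Con A) (k : ℕ) : iterD N θ k ≤ θ := by
  induction k with
  | zero => exact Con.le_refl' _
  | succ k ih => exact Con.le_trans' (nfold_le _ _) ih

theorem iterD_anti {A : Algebra σ} (N : ℕ) (θ : Con A) {k l : ℕ} (h : k ≤ l) :
    iterD N θ l ≤ iterD N θ k := by
  obtain ⟨d, rfl⟩ := Nat.exists_eq_add_of_le h
  rw [← iterD_add]
  exact iterD_le _ _ _

theorem Xi.le {A : Algebra σ} {θ φ : Con A} (h : Xi θ φ) : φ ≤ θ := by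
  induction h with
  | base => exact Con.le_refl' _
  | comm γ _ ih => exact Con.le_trans' (commList_le_last γ) (ih _)

theorem Xi.exists_iterD {A : Algebra σ} {θ φ : Con A} (h : Xi θ φ) :
    ∃ N₀ k₀, ∀ N k, N₀ ≤ N → k₀ ≤ k → iterD N θ k ≤ φ := by
  induction h with
  | base => exact ⟨0, 0, fun N k _ _ => iterD_le N θ k⟩
  | @comm m γ _ ih =>
    choose N₀ k₀ hh using ih
    refine ⟨max (m + 2) (Finset.univ.sup N₀), Finset.univ.sup k₀ + 1, fun N k hN hk => ?_⟩
    refine Con.le_trans' (iterD_anti N θ hk) ?_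
    refine Con.le_trans' (nfold_anti _ (le_trans (le_max_left _ _) hN)) ?_
    refine commList_mono fun i => hh i N _ ?_ ?_
    · exact le_trans (Finset.le_sup (f := N₀) (Finset.mem_univ i)) (le_trans (le_max_right _ _) hN)
    · exact Finset.le_sup (f := k₀) (Finset.mem_univ i)

theorem exists_iterMal {A : Algebra σ} (N : ℕ) (c : A.carrier → A.carrier → A.carrier → A.carrier)
    (hc : Pres A c) (hcm : ∀ θ : Con A, Mal c θ (nfold θ N)) (k : ℕ) :
    ∃ p, Pres A p ∧ ∀ θ : Con A, Mal p θ (iterD N θ (2 ^ k)) := by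
  induction k with
  | zero => exact ⟨c, hc, hcm⟩
  | succ k ih =>
    obtain ⟨q, hq, hqm⟩ := ih
    set K := 2 ^ k
    have hid : ∀ b, q b b b = b := fun b =>
      iterD_le N (Con.bot : Con A) K _ _ (hqm Con.bot b b rfl).1
    -- improve the left-hand side
    obtain ⟨r, hr, hrm⟩ : ∃ r, Pres A r ∧ ∀ (θ : Con A) a b, θ.r a b →
        (iterD N θ (K + K)).r (r a b b) a ∧ (iterD N θ K).r (r b b a) a := by
      refine ⟨fun x y z => q x (q x y y) (q x y z), ?_, fun θ a b hab => ⟨?_, ?_⟩⟩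
      · intro ι S hS f g h hf hg hh
        exact hq ι S hS _ _ _ hf (hq ι S hS _ _ _ hf hg hg) (hq ι S hS _ _ _ hf hg hh)
      · rw [← iterD_add]
        exact (hqm _ _ _ ((iterD N θ K).symm (hqm θ a b hab).1)).1
      · simp only [hid]
        have h1 := (hqm θ a b hab).2
        have h2 : θ.r (q b b a) b := θ.trans (iterD_le _ _ _ _ _ h1) hab
        exact (iterD N θ K).trans (hqm θ _ _ h2).2 h1
    have hidr : ∀ b, r b b b = b := fun b =>
      iterD_le N (Con.bot : Con A) K _ _ (hrm Con.bot b b rfl).2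
    refine ⟨fun x y z => r (r x y z) (r y y z) z, ?_, fun θ a b hab => ?_⟩
    · intro ι S hS f g h hf hg hh
      exact hr ι S hS _ _ _ (hr ι S hS _ _ _ hf hg hh) (hr ι S hS _ _ _ hg hg hh) hh
    · rw [pow_succ, Nat.mul_two]
      constructor
      · simp only [hidr]
        have h1 := (hrm θ a b hab).1
        have h2 : θ.r (r a b b) b := θ.trans (iterD_le _ _ _ _ _ h1) hab
        exact (iterD N θ (K + K)).trans (hrm θ _ _ h2).1 h1
      · rw [← iterD_add]
        exact (hrm _ _ _ ((iterD N θ K).symm (hrm θ a b hab).2)).2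

theorem conPair_le {A : Algebra σ} {a b : A.carrier} {θ : Con A} (h : θ.r a b) :
    conPair A a b ≤ θ := by
  intro x y hxy
  refine hxy θ ?_
  rintro _ rfl
  exact h

theorem exists_mal {V : Algebra σ → Prop}
    (hdiff : ∀ m : ℕ, 2 ≤ m → ∃ c : Term σ (Fin 3), IsWeakNDiffTerm V m c)
    {A : Algebra σ} (hA : V A) {θ φ : Con A} (h : Xi θ φ) :
    ∃ p, Pres A p ∧ Mal p θ φ := by
  obtain ⟨N, k, hNk⟩ := h.exists_iterD
  obtain ⟨c, hc⟩ := hdiff (N + 2) (by omega)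
  obtain ⟨p, hp, hpm⟩ := exists_iterMal (N + 2) _ (Pres.term (A := A) c) (fun θ a b hab => by
    have hle := nfold_mono (conPair_le hab) (N + 2)
    have := hc A hA a b
    exact ⟨hle _ _ this.1, (nfold θ (N + 2)).symm (hle _ _ this.2)⟩) k
  refine ⟨p, hp, fun a b hab => ?_⟩
  have hle := hNk (N + 2) (2 ^ k) (by omega) (Nat.lt_two_pow_self).le
  exact ⟨hle _ _ (hpm θ a b hab).1, hle _ _ (hpm θ a b hab).2⟩

theorem Xi.commList {A : Algebra σ} {θ : Con A} {m : ℕ} {θs : Fin (m + 1) → Con A}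
    (h : ∀ i, Xi θ (θs i)) : Xi θ (commList θs) := by
  cases m with
  | zero => exact h 0
  | succ m => exact Xi.comm θs h

/-! ### Homomorphisms -/

theorem Cu.map {A B : Algebra σ} {h : A.carrier → B.carrier} (hh : IsHom A B h) {ι : Type}
    {α : ι → Con A} {α' : ι → Con B} (H : ∀ i x y, (α i).r x y → (α' i).r (h x) (h y))
    {F : (ι → Bool) → A.carrier} (hF : Cu α F) : Cu α' (fun ε => h (F ε)) := by
  induction hF with
  | const a => exact Cu.const (h a)
  | edge i x y hxy =>
    have := Cu.edge (α := α') i _ _ (H i x y hxy)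
    simp only [apply_ite h]
    exact this
  | app o x _ ih =>
    simp only [hh o]
    exact Cu.app o _ ih

theorem Cu.lift {A B : Algebra σ} {h : A.carrier → B.carrier} (hh : IsHom A B h)
    (hs : Function.Surjective h) {ι : Type}
    {α : ι → Con A} {α' : ι → Con B} (H : ∀ i x y, (α' i).r (h x) (h y) → (α i).r x y)
    {F : (ι → Bool) → B.carrier} (hF : Cu α' F) : ∃ G, Cu α G ∧ ∀ ε, F ε = h (G ε) := by
  induction hF with
  | const b =>
    obtain ⟨a, rfl⟩ := hs b
    exact ⟨_, Cu.const a, fun _ => rfl⟩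
  | edge i x y hxy =>
    obtain ⟨x, rfl⟩ := hs x
    obtain ⟨y, rfl⟩ := hs y
    exact ⟨_, Cu.edge i x y (H _ _ _ hxy), fun ε => by simp only [apply_ite h]⟩
  | app o x _ ih =>
    choose G hG hx using ih
    exact ⟨_, Cu.app o G hG, fun ε => by simp only [hh o, hx]⟩

theorem Cen.push {A B : Algebra σ} {h : A.carrier → B.carrier} (hh : IsHom A B h)
    (hs : Function.Surjective h) {ι : Type} [DecidableEq ι]
    {α : ι → Con A} {α' : ι → Con B} (H : ∀ i x y, (α' i).r (h x) (h y) → (α i).r x y)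
    {γ : Con A} {γ' : Con B} (hγ : ∀ x y, γ.r x y ↔ γ'.r (h x) (h y)) {i₀ : ι}
    (hC : Cen α i₀ γ) : Cen α' i₀ γ' := by
  intro F hF hyp
  obtain ⟨G, hG, hFG⟩ := hF.lift hh hs H
  simp only [hFG, ← hγ] at hyp ⊢
  exact hC G hG hyp

theorem Cen.pull {A B : Algebra σ} {h : A.carrier → B.carrier} (hh : IsHom A B h)
    {ι : Type} [DecidableEq ι]
    {α : ι → Con A} {α' : ι → Con B} (H : ∀ i x y, (α i).r x y → (α' i).r (h x) (h y))
    {γ : Con A} {γ' : Con B} (hγ : ∀ x y, γ.r x y ↔ γ'.r (h x) (h y)) {i₀ : ι}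
    (hC : Cen α' i₀ γ') : Cen α i₀ γ := by
  intro F hF hyp
  have := hC _ (hF.map hh H)
  simp only [← hγ] at this
  exact this hyp

/-- Pullback of a congruence along a homomorphism. -/
def Con.pullback {A B : Algebra σ} {h : A.carrier → B.carrier} (hh : IsHom A B h) (c : Con B) :
    Con A where
  r x y := c.r (h x) (h y)
  refl _ := c.refl _
  symm h := c.symm h
  trans h h' := c.trans h h'
  compat o x y hxy := by
    rw [hh, hh]
    exact c.compat o _ _ hxy

theorem isHom_mk (A : Algebra σ) (η : Con A) :
    IsHom A (quotAlg A η) (Quotient.mk η.toSetoid) := by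
  intro o x
  apply Quotient.sound
  refine η.compat o _ _ fun i => ?_
  exact η.symm (Quotient.exact (Quotient.out_eq (Quotient.mk η.toSetoid (x i))))

theorem IsHom.eval {A B : Algebra σ} {h : A.carrier → B.carrier} (hh : IsHom A B h) {X : Type}
    (t : Term σ X) (v : X → A.carrier) : h (t.eval A v) = t.eval B (fun x => h (v x)) := by
  induction t with
  | var x => rfl
  | app o s ih =>
    simp only [Term.eval]
    rw [hh o]
    simp only [ih]

theorem IsVariety.surj {V : Algebra σ → Prop} (hV : IsVariety V) {A B : Algebra σ} (hA : V A)
    {h : A.carrier → B.carrier} (hh : IsHom A B h) (hs : Function.Surjective h) : V B := by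
  obtain ⟨E, hE⟩ := hV
  rw [hE] at hA ⊢
  intro e he v
  choose w hw using fun n => hs (v n)
  have : v = fun n => h (w n) := funext fun n => (hw n).symm
  rw [this, ← hh.eval, ← hh.eval, hA e he]

theorem IsVariety.inj {V : Algebra σ → Prop} (hV : IsVariety V) {A B : Algebra σ} (hA : V A)
    {h : B.carrier → A.carrier} (hh : IsHom B A h) (hs : Function.Injective h) : V B := by
  obtain ⟨E, hE⟩ := hV
  rw [hE] at hA ⊢
  intro e he v
  apply hs
  rw [hh.eval, hh.eval, hA e he]

theorem isHom_proj {I : Type} (As : I → Algebra σ) (i : I) :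
    IsHom (prodAlg As) (As i) (fun x => x i) := fun _ _ => rfl

theorem IsVariety.prod {V : Algebra σ → Prop} (hV : IsVariety V) {I : Type} {As : I → Algebra σ}
    (hA : ∀ i, V (As i)) : V (prodAlg As) := by
  obtain ⟨E, hE⟩ := hV
  rw [hE]
  intro e he v
  funext i
  have h1 := (isHom_proj As i).eval e.1 v
  have h2 := (isHom_proj As i).eval e.2 v
  exact h1.trans (((hE _).1 (hA i) e he _).trans h2.symm)

/-! ### The parts of the theorem -/

theorem part1a {V : Algebra σ → Prop}
    (hdiff : ∀ m : ℕ, 2 ≤ m → ∃ c : Term σ (Fin 3), IsWeakNDiffTerm V m c)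
    {A : Algebra σ} (hA : V A) (θ : Con A) (m : ℕ) (θs : Fin (m + 1) → Con A)
    (hx : ∀ i, Xi θ (θs i)) (γ : Con A) : Cen θs (Fin.last m) γ ↔ commList θs ≤ γ := by
  refine ⟨commList_le _ _, fun h => ?_⟩
  obtain ⟨p, hp, hm⟩ := exists_mal hdiff hA (Xi.commList hx)
  exact cen_up hp hm h (fun i => (hx i).le) _ (cen_commList θs)

theorem part1b {V : Algebra σ → Prop}
    (hdiff : ∀ m : ℕ, 2 ≤ m → ∃ c : Term σ (Fin 3), IsWeakNDiffTerm V m c)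
    {A : Algebra σ} (hA : V A) (θ : Con A) (m : ℕ) (θs : Fin (m + 1) → Con A)
    (hx : ∀ i, Xi θ (θs i)) (η : Con A) (hη : ∀ i, η ≤ θs i) :
    commList (fun i => (θs i).quot η (hη i)) =
            (Con.sup (commList θs) η).quot η Con.le_sup_right := by
  apply Con.le_antisymm'
  · refine commList_le _ _ (Cen.push (isHom_mk A η) Quotient.mk_surjective (α := θs)
      (fun i x y h => h) (γ := Con.sup (commList θs) η) (fun x y => Iff.rfl) ?_)
    rw [part1a hdiff hA θ m θs hx]
    exact fun a b h e he => he (a, b) (Or.inl h)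
  · set γ' := commList (fun i => (θs i).quot η (hη i)) with hγ'
    have h1 : commList θs ≤ Con.pullback (isHom_mk A η) γ' :=
      commList_le _ _ (Cen.pull (isHom_mk A η) (α' := fun i => (θs i).quot η (hη i))
        (fun i x y h => h) (γ' := γ') (fun x y => Iff.rfl) (cen_commList _))
    have h2 : η ≤ Con.pullback (isHom_mk A η) γ' := by
      intro x y hxy
      show γ'.r _ _
      have : Quotient.mk η.toSetoid x = Quotient.mk η.toSetoid y := Quotient.sound hxy
      rw [this]
      exact γ'.refl _
    intro x y
    refine Quotient.inductionOn₂ x y fun a b hab => ?_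
    have hab' : (Con.sup (commList θs) η).r a b := hab
    exact hab' (Con.pullback (isHom_mk A η) γ') fun q hq => by
      rcases hq with hq | hq
      · exact h1 _ _ hq
      · exact h2 _ _ hq

theorem part1c {V : Algebra σ → Prop}
    (hdiff : ∀ m : ℕ, 2 ≤ m → ∃ c : Term σ (Fin 3), IsWeakNDiffTerm V m c)
    {A : Algebra σ} (hA : V A) (θ : Con A) (m₀ r₀ : ℕ) (θs : Fin ((m₀ + 1) + (r₀ + 1)) → Con A)
    (hx : ∀ i, Xi θ (θs i)) :
    commList (Fin.snoc (fun j : Fin (m₀ + 1) => θs (Fin.castAdd (r₀ + 1) j))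
          (commList (fun j : Fin (r₀ + 1) => θs (Fin.natAdd (m₀ + 1) j)))) ≤
        commList (n := m₀ + 1 + r₀) θs := by
  obtain ⟨p, hp, hm⟩ := exists_mal hdiff hA (Xi.commList (m := m₀ + 1 + r₀) hx)
  exact nested θ m₀ r₀ θs hp (fun i => (hx i).le) hm

theorem lcs_le {V : Algebra σ → Prop}
    (hdiff : ∀ m : ℕ, 2 ≤ m → ∃ c : Term σ (Fin 3), IsWeakNDiffTerm V m c)
    {A : Algebra σ} (hA : V A) (θ : Con A) (k : ℕ) : lcs θ k ≤ nfold θ (k + 1) := by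
  induction k with
  | zero => exact Con.le_refl' _
  | succ k ih =>
    have h := part1c hdiff hA θ 0 k (fun _ => θ) (fun _ => Xi.base)
    have h2 : lcs θ (k + 1) ≤ commList (Fin.snoc (α := fun _ => Con A) (fun _ : Fin (0 + 1) => θ)
        (commList (fun _ : Fin (k + 1) => θ))) := by
      show commList (fun i : Fin 2 => (![θ, lcs θ k] : Fin 2 → Con A) i) ≤ _
      refine commList_mono fun i => ?_
      fin_cases i
      · exact Con.le_refl' _
      · exact ih
    refine Con.le_trans' (Con.le_trans' h2 h) ?_
    have : ∀ a b : ℕ, a = b → commList (fun _ : Fin (a + 1) => θ) ≤ commList (fun _ : Fin (b + 1) => θ) := by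
      rintro a _ rfl
      exact Con.le_refl' _
    exact this (0 + 1 + k) (k + 1) (by omega)

theorem supernil_iff (A : Algebra σ) (n : ℕ) : Supernilpotent A n ↔
    Cen (fun _ : Fin (n - 1 + 1) => (Con.top : Con A)) (Fin.last _) Con.bot := by
  constructor
  · intro h
    have := cen_commList (fun _ : Fin (n - 1 + 1) => (Con.top : Con A))
    have h' : commList (fun _ : Fin (n - 1 + 1) => (Con.top : Con A)) = Con.bot := h
    rw [h'] at this
    exact this
  · intro h
    refine Con.le_antisymm' (commList_le _ _ h) ?_
    intro a b hab
    have : a = b := hab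
    rw [this]
    exact Con.refl _ _

theorem part3b {V : Algebra σ → Prop} (hV : IsVariety V)
    (hdiff : ∀ m : ℕ, 2 ≤ m → ∃ c : Term σ (Fin 3), IsWeakNDiffTerm V m c)
    {A : Algebra σ} (hA : V A) (α β : Con A) (k : ℕ) (hk : 2 ≤ k) (hαβ : nfold β k ≤ α)
    (γ s : Con A) (hαγ : α ≤ γ) (hcov : Con.Covers γ s) (hs : s ≤ β) :
    Centralizes (fun _ : Fin 1 => s) s γ := by
  have hiff := (centralizes_iff (fun _ : Fin 2 => s) γ).trans
    (part1a hdiff hA s 1 (fun _ => s) (fun _ => Xi.base) γ)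
  refine hiff.2 ?_
  have hγs : γ ≤ s := hcov.1.1
  have hB : V (quotAlg A γ) := hV.surj hA (isHom_mk A γ) Quotient.mk_surjective
  by_contra hnot
  have hsup : Con.sup (commList (fun _ : Fin 2 => s)) γ = s := by
    refine hcov.2 _ ⟨Con.le_sup_right, fun h => hnot ?_⟩ ?_
    · exact fun a b hab => h a b (fun e he => he (a, b) (Or.inl hab))
    · intro a b hab
      refine hab s fun q hq => ?_
      rcases hq with hq | hq
      · exact commList_le_last (fun _ : Fin 2 => s) _ _ hq
      · exact hγs _ _ hq
  have hb2 := part1b hdiff hA s 1 (fun _ => s) (fun _ => Xi.base) γ (fun _ => hγs)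
  have hbk := part1b hdiff hA s (k - 1) (fun _ => s) (fun _ => Xi.base) γ (fun _ => hγs)
  set t := s.quot γ hγs with ht
  have htt : binComm t t = t := by
    refine Eq.trans hb2 ?_
    refine Con.ext_r fun x y => ?_
    refine Quotient.inductionOn₂ x y fun a b => ?_
    show (Con.sup (commList (fun _ : Fin 2 => s)) γ).r a b ↔ s.r a b
    rw [hsup]
  have hl : ∀ j, lcs t j = t := by
    intro j
    induction j with
    | zero => rfl
    | succ j ih =>
      show binComm t (lcs t j) = t
      rw [ih, htt]
  have hle := lcs_le hdiff hB t (k - 1)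
  rw [hl] at hle
  refine hcov.1.2 fun a b hab => ?_
  have h1 : (commList (fun _ : Fin (k - 1 + 1) => t)).r
      (Quotient.mk γ.toSetoid a) (Quotient.mk γ.toSetoid b) := hle _ _ hab
  rw [hbk] at h1
  have h2 : (Con.sup (commList (fun _ : Fin (k - 1 + 1) => s)) γ).r a b := h1
  refine h2 γ fun q hq => ?_
  rcases hq with hq | hq
  · exact hαγ _ _ (hαβ _ _ (nfold_mono hs k _ _ hq))
  · exact hq

/-- Theorem 5.9 of "On Supernilpotent Algebras": properties of the higher
commutator in varieties with weak `m`-difference terms for all `m ≥ 2`. -/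
theorem weak_difference_terms_higher_commutator {σ : Signature} (V : Algebra σ → Prop)
    (hV : IsVariety V)
    (hdiff : ∀ m : ℕ, 2 ≤ m → ∃ c : Term σ (Fin 3), IsWeakNDiffTerm V m c)
    (A : Algebra σ) (hA : V A) :
    -- (1a), (1b)
    (∀ (θ : Con A) (m : ℕ) (θs : Fin (m + 1) → Con A), (∀ i, Xi θ (θs i)) →
      ((∀ γ : Con A,
          Centralizes (fun j : Fin m => θs j.castSucc) (θs (Fin.last m)) γ ↔
            commList θs ≤ γ) ∧
        (∀ (η : Con A) (hη : ∀ i, η ≤ θs i),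
          commList (fun i => (θs i).quot η (hη i)) =
            (Con.sup (commList θs) η).quot η Con.le_sup_right))) ∧
    -- (1c) nested commutators
    (∀ (θ : Con A) (m₀ r₀ : ℕ) (θs : Fin ((m₀ + 1) + (r₀ + 1)) → Con A),
      (∀ i, Xi θ (θs i)) →
      commList (Fin.snoc (fun j : Fin (m₀ + 1) => θs (Fin.castAdd (r₀ + 1) j))
          (commList (fun j : Fin (r₀ + 1) => θs (Fin.natAdd (m₀ + 1) j)))) ≤
        commList θs) ∧
    -- (2) the n-supernilpotent members of V form a subvariety
    (∀ n : ℕ, 2 ≤ n →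
      (∀ (A₁ B : Algebra σ), V A₁ → Supernilpotent A₁ n →
        ∀ h : A₁.carrier → B.carrier, IsHom A₁ B h → Function.Surjective h →
          V B ∧ Supernilpotent B n) ∧
      (∀ (A₁ B : Algebra σ), V A₁ → Supernilpotent A₁ n →
        ∀ h : B.carrier → A₁.carrier, IsHom B A₁ h → Function.Injective h →
          V B ∧ Supernilpotent B n) ∧
      (∀ (I : Type) (As : I → Algebra σ),
        (∀ i, V (As i) ∧ Supernilpotent (As i) n) →
          V (prodAlg As) ∧ Supernilpotent (prodAlg As) n)) ∧
    -- (3) supernilpotent implies nilpotent of class n-1, and covers in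
    -- supernilpotent intervals are abelian
    (∀ n : ℕ, 2 ≤ n → Supernilpotent A n →
      (NilpotentOfClass A (n - 1) ∧
        ∀ α β : Con A, α ≤ β → (∃ k, 2 ≤ k ∧ nfold β k ≤ α) →
          ∀ γc s : Con A, α ≤ γc → Con.Covers γc s → s ≤ β →
            Centralizes (fun _ : Fin 1 => s) s γc)) := by
  refine ⟨fun θ m θs hx => ⟨fun γ => ?_, fun η hη => ?_⟩, fun θ m₀ r₀ θs hx => ?_,
    fun n hn => ⟨?_, ?_, ?_⟩, fun n hn hsn => ⟨?_, ?_⟩⟩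
  · rw [centralizes_iff]
    exact part1a hdiff hA θ m θs hx γ
  · exact part1b hdiff hA θ m θs hx η hη
  · exact part1c hdiff hA θ m₀ r₀ θs hx
  · intro A₁ B hA₁ hsn h hh hs
    refine ⟨hV.surj hA₁ hh hs, ?_⟩
    rw [supernil_iff]
    refine Cen.push hh hs (α := fun _ => Con.top) (fun _ _ _ _ => trivial)
      (γ := Con.pullback hh Con.bot) (fun _ _ => Iff.rfl) ?_
    rw [part1a hdiff hA₁ Con.top _ _ (fun _ => Xi.base)]
    have h' : commList (fun _ : Fin (n - 1 + 1) => (Con.top : Con A₁)) = Con.bot := hsn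
    rw [h']
    intro a b hab
    exact congrArg h hab
  · intro A₁ B hA₁ hsn h hh hs
    refine ⟨hV.inj hA₁ hh hs, ?_⟩
    rw [supernil_iff] at hsn ⊢
    exact Cen.pull hh (fun _ _ _ _ => trivial) (fun _ _ => ⟨congrArg h, fun e => hs e⟩) hsn
  · intro I As hAs
    refine ⟨hV.prod fun i => (hAs i).1, ?_⟩
    rw [supernil_iff]
    intro F hF hyp
    funext i
    have hsn := (supernil_iff _ _).1 (hAs i).2
    exact hsn _ (hF.map (isHom_proj As i) (fun _ _ _ _ => trivial))
      (fun ε h0 hj => congrFun (hyp ε h0 hj) i)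
  · have h1 := lcs_le hdiff hA (Con.top : Con A) (n - 1)
    have h2 : nfold (Con.top : Con A) (n - 1 + 1) = Con.bot := hsn
    rw [h2] at h1
    refine Con.le_antisymm' h1 ?_
    intro a b hab
    have : a = b := hab
    rw [this]
    exact Con.refl _ _
  · rintro α β _ ⟨k, hk, hkα⟩ γc s hαγ hcov hs
    exact part3b hV hdiff hA α β k hk hkα γc s hαγ hcov hs

end UA
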